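/- arXiv:1506.06922 — 2 statements merged into one kernel-verified Lean document; each statement's English description precedes it below -/
import Mathlib

section
/- A continuous function f : (0,∞) → (0,∞) is operator monotone decreasing if and only if f is decreasing on (0,∞) and f(A !_t B) ≥ f(A) !_t f(B) for every n ∈ ℕ, all n×n positive definite complex matrices A, B, and every t ∈ [0,1]. -/
open Matrix
open scoped ComplexOrder

/-- The Loewner order on matrices: `A ≤ B` iff `B - A` is positive semidefinite. -/
def MLE {n : ℕ} (A B : Matrix (Fin n) (Fin n) ℂ) : Prop := (B - A).PosSemidef

/-- The `t`-weighted harmonic mean `A !_t B = ((1-t)A⁻¹ + tB⁻¹)⁻¹`. -/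
noncomputable def wharm {n : ℕ} (t : ℝ) (A B : Matrix (Fin n) (Fin n) ℂ) :
    Matrix (Fin n) (Fin n) ℂ := ((1 - t) • A⁻¹ + t • B⁻¹)⁻¹

/-- The `t`-weighted arithmetic mean `A ∇_t B = (1-t)A + tB`. -/
noncomputable def warith {n : ℕ} (t : ℝ) (A B : Matrix (Fin n) (Fin n) ℂ) :
    Matrix (Fin n) (Fin n) ℂ := (1 - t) • A + t • B

/-- Real powers of a matrix, via the continuous functional calculus. -/
noncomputable def mpow {n : ℕ} (A : Matrix (Fin n) (Fin n) ℂ) (r : ℝ) :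
    Matrix (Fin n) (Fin n) ℂ := cfc (fun x : ℝ => x ^ r) A

/-- The `t`-weighted geometric mean `A #_t B = A^{1/2} (A^{-1/2} B A^{-1/2})^t A^{1/2}`. -/
noncomputable def wgeom {n : ℕ} (t : ℝ) (A B : Matrix (Fin n) (Fin n) ℂ) :
    Matrix (Fin n) (Fin n) ℂ :=
  mpow A (1/2) * mpow (mpow A (-(1/2)) * B * mpow A (-(1/2))) t * mpow A (1/2)

/-- `f` is operator monotone (increasing): order preserving on positive definite
matrices of every size, via the continuous functional calculus. -/
def OperatorMonotone (f : ℝ → ℝ) : Prop :=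
  ∀ (n : ℕ) (A B : Matrix (Fin n) (Fin n) ℂ), A.PosDef → B.PosDef →
    MLE A B → MLE (cfc f A) (cfc f B)

/-- `f` is operator monotone decreasing: order reversing on positive definite
matrices of every size, via the continuous functional calculus. -/
def OperatorAntitone (f : ℝ → ℝ) : Prop :=
  ∀ (n : ℕ) (A B : Matrix (Fin n) (Fin n) ℂ), A.PosDef → B.PosDef →
    MLE A B → MLE (cfc f B) (cfc f A)

section helpers
open scoped MatrixOrder
lemma aux_cont {ι : Type*} [Fintype ι] [DecidableEq ι] (f : ℝ → ℝ) (A : Matrix ι ι ℂ) :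
    ContinuousOn f (spectrum ℝ A) := (Matrix.finite_real_spectrum (A := A)).continuousOn f

lemma aux_cfc_poly {ι : Type*} [Fintype ι] [DecidableEq ι] (f : ℝ → ℝ) (A : Matrix ι ι ℂ)
    (hA : A.IsHermitian) (p : Polynomial ℝ) (hp : ∀ x ∈ spectrum ℝ A, p.eval x = f x) :
    cfc f A = Polynomial.aeval A p := by
  rw [← cfc_polynomial p A hA]
  exact cfc_congr fun x hx => (hp x hx).symm

lemma aux_interp (f : ℝ → ℝ) (S : Set ℝ) (hS : S.Finite) :
    ∃ p : Polynomial ℝ, ∀ x ∈ S, p.eval x = f x := by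
  classical
  refine ⟨Lagrange.interpolate hS.toFinset id f, fun x hx => ?_⟩
  have := Lagrange.eval_interpolate_at_node (s := hS.toFinset) (v := id) (i := x) f
    (Function.injective_id.injOn) (by simpa using hx)
  simpa using this

lemma aux_spec_pos {ι : Type*} [Fintype ι] [DecidableEq ι] {A : Matrix ι ι ℂ} (hA : A.PosDef) :
    ∀ x ∈ spectrum ℝ A, 0 < x := by
  intro x hx
  rw [hA.1.spectrum_real_eq_range_eigenvalues] at hx
  obtain ⟨i, rfl⟩ := hx
  exact hA.eigenvalues_pos i

lemma aux_cfc_inv {ι : Type*} [Fintype ι] [DecidableEq ι] (f : ℝ → ℝ) {A : Matrix ι ι ℂ}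
    (hA : A.PosDef) : cfc (fun x => f x⁻¹) A = cfc f A⁻¹ := by
  obtain ⟨u, rfl⟩ := hA.isUnit
  rw [← Matrix.coe_units_inv]
  exact cfc_comp_inv f u (((Matrix.finite_real_spectrum).image _).continuousOn f) hA.1

lemma aux_cfc_posDef {ι : Type*} [Fintype ι] [DecidableEq ι] {f : ℝ → ℝ}
    (hf' : ∀ x ∈ Set.Ioi (0:ℝ), f x ∈ Set.Ioi (0:ℝ)) {A : Matrix ι ι ℂ}
    (hA : A.PosDef) : (cfc f A).PosDef := by
  have h0 : (0 : Matrix ι ι ℂ) ≤ cfc f A :=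
    cfc_nonneg fun x hx => (hf' x (aux_spec_pos hA x hx)).le
  rw [Matrix.nonneg_iff_posSemidef] at h0
  rw [h0.posDef_iff_isUnit]
  refine (isUnit_cfc_iff f A (aux_cont f A) hA.1).2 ?_
  intro x hx
  exact (hf' x (aux_spec_pos hA x hx)).ne'

/-- block matrix with identity -/
lemma aux_block {ι : Type*} [Fintype ι] [DecidableEq ι] {A : Matrix ι ι ℂ}
    (hA : A.PosDef) : (fromBlocks A⁻¹ 1 1ᴴ A).PosSemidef := by
  have := hA.isUnit.invertible
  rw [Matrix.PosDef.fromBlocks₂₂ _ _ hA]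
  simpa using Matrix.PosSemidef.zero

lemma aux_inv_anti {ι : Type*} [Fintype ι] [DecidableEq ι] {A B : Matrix ι ι ℂ}
    (hA : A.PosDef) (hB : B.PosDef) (h : A ≤ B) : B⁻¹ ≤ A⁻¹ := by
  have := hB.isUnit.invertible
  have h1 := aux_block hA
  have h2 : (fromBlocks (0 : Matrix ι ι ℂ) 0 0ᴴ (B - A)).PosSemidef := by
    have := (Matrix.PosSemidef.conjTranspose_mul_mul_same (Matrix.le_iff.1 h)
      (fromCols (0 : Matrix ι ι ℂ) (1 : Matrix ι ι ℂ)))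
    have e : fromCols (0 : Matrix (ι ⊕ ι) ι ℂ) (fromRows (0 : Matrix ι ι ℂ) (B - A)) =
        fromBlocks 0 0 0ᴴ (B - A) := by
      ext i j
      rcases i with i | i <;> rcases j with j | j <;> simp
    rw [← e]
    simpa [conjTranspose_fromCols_eq_fromRows_conjTranspose, fromRows_mul_fromCols,
      fromRows_mul] using this
  have h3 := h1.add h2
  rw [fromBlocks_add] at h3
  have h4 : (fromBlocks A⁻¹ 1 1ᴴ B).PosSemidef := by simpa using h3
  rw [Matrix.PosDef.fromBlocks₂₂ _ _ hB] at h4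
  rw [Matrix.le_iff]
  simpa using h4

lemma aux_comb_posDef {ι : Type*} [Fintype ι] [DecidableEq ι] {A B : Matrix ι ι ℂ}
    (hA : A.PosDef) (hB : B.PosDef) {t : ℝ} (ht : t ∈ Set.Icc (0:ℝ) 1) :
    ((1 - t) • A + t • B).PosDef := by
  obtain ⟨h0, h1⟩ := ht
  rcases h0.eq_or_lt with rfl | h0
  · simpa using hA
  · exact Matrix.PosDef.posSemidef_add (hA.posSemidef.smul (sub_nonneg.2 h1)) (hB.smul h0)

lemma aux_inv_convex {ι : Type*} [Fintype ι] [DecidableEq ι] {A B : Matrix ι ι ℂ}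
    (hA : A.PosDef) (hB : B.PosDef) {t : ℝ} (ht : t ∈ Set.Icc (0:ℝ) 1) :
    ((1 - t) • A + t • B)⁻¹ ≤ (1 - t) • A⁻¹ + t • B⁻¹ := by
  have hC := aux_comb_posDef hA hB ht
  have := hC.isUnit.invertible
  have h := ((aux_block hA).smul (sub_nonneg.2 ht.2)).add ((aux_block hB).smul ht.1)
  rw [fromBlocks_smul, fromBlocks_smul, fromBlocks_add] at h
  have e : (1 - t) • (1 : Matrix ι ι ℂ) + t • (1 : Matrix ι ι ℂ) = 1 := by
    rw [← add_smul]; simp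
  rw [conjTranspose_one, e] at h
  have h4 : (fromBlocks ((1 - t) • A⁻¹ + t • B⁻¹) 1 1ᴴ ((1 - t) • A + t • B)).PosSemidef := by
    simpa using h
  rw [Matrix.PosDef.fromBlocks₂₂ _ _ hC] at h4
  rw [Matrix.le_iff]
  simpa using h4

lemma aux_limit {ι : Type*} [Fintype ι] [DecidableEq ι] {A B : Matrix ι ι ℂ}
    (hA : A.IsHermitian) (hB : B.IsHermitian)
    (h : ∀ δ : ℝ, 0 < δ → A ≤ B + δ • 1) : A ≤ B := by
  have hsa : IsSelfAdjoint (B - A) := hB.sub hA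
  rw [← sub_nonneg]
  rw [StarOrderedRing.nonneg_iff_spectrum_nonneg (R := ℝ) (B - A) hsa]
  intro x hx
  by_contra! hx0
  have h1 := h (-x/2) (by linarith)
  have h2 : 0 ≤ (B - A) + algebraMap ℝ (Matrix ι ι ℂ) (-x/2) := by
    rw [Algebra.algebraMap_eq_smul_one]
    rw [← sub_nonneg] at h1
    convert h1 using 1; abel
  have h3 := spectrum_nonneg_of_nonneg h2 (x := x + (-x/2))
    (by rw [← spectrum.add_mem_add_iff (r := x) (s := -x/2)] at hx; rwa [add_comm (B - A)])
  linarith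

lemma aux_bound {ι : Type*} [Fintype ι] [DecidableEq ι] {A : Matrix ι ι ℂ}
    (hA : A.IsHermitian) : ∃ M : ℝ, 0 < M ∧ A ≤ M • 1 := by
  obtain ⟨M, hM⟩ := (Matrix.finite_real_spectrum (A := A)).bddAbove
  refine ⟨max M 1, by positivity, ?_⟩
  rw [← Algebra.algebraMap_eq_smul_one]
  exact le_algebraMap_of_spectrum_le (fun x hx => (hM hx).trans (le_max_left _ _)) hA


lemma aux_reindex {ι κ : Type*} [Fintype ι] [DecidableEq ι] [Fintype κ] [DecidableEq κ]
    (f : ℝ → ℝ) (e : ι ≃ κ) {A : Matrix ι ι ℂ} (hA : A.IsHermitian) :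
    cfc f (A.submatrix e.symm e.symm) = (cfc f A).submatrix e.symm e.symm := by
  obtain ⟨p, hp⟩ := aux_interp f (spectrum ℝ A ∪ spectrum ℝ (A.submatrix e.symm e.symm))
    ((Matrix.finite_real_spectrum).union (Matrix.finite_real_spectrum))
  rw [aux_cfc_poly f A hA p (fun x hx => hp x (Or.inl hx)),
    aux_cfc_poly f _ (hA.submatrix _) p (fun x hx => hp x (Or.inr hx))]
  exact Polynomial.aeval_algHom_apply (Matrix.reindexAlgEquiv ℝ ℂ e) A p

lemma aux_OA {ι : Type*} [Fintype ι] [DecidableEq ι] {f : ℝ → ℝ} (h : OperatorAntitone f)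
    {A B : Matrix ι ι ℂ} (hA : A.PosDef) (hB : B.PosDef) (hAB : A ≤ B) : cfc f B ≤ cfc f A := by
  let e := Fintype.equivFin ι
  have h1 := h _ (A.submatrix e.symm e.symm) (B.submatrix e.symm e.symm)
    (hA.submatrix e.symm.injective) (hB.submatrix e.symm.injective)
    (by have := (Matrix.le_iff.1 hAB).submatrix e.symm
        simpa [MLE, submatrix_sub] using this)
  rw [aux_reindex f e hA.1, aux_reindex f e hB.1] at h1
  have h2 := Matrix.PosSemidef.submatrix h1 e
  rw [Matrix.le_iff]
  simpa [submatrix_sub] using h2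

lemma aux_mono {ι : Type*} [Fintype ι] [DecidableEq ι] {f : ℝ → ℝ} (h : OperatorAntitone f)
    {A B : Matrix ι ι ℂ} (hA : A.PosDef) (hB : B.PosDef) (hAB : A ≤ B) :
    cfc (fun x => f x⁻¹) A ≤ cfc (fun x => f x⁻¹) B := by
  rw [aux_cfc_inv f hA, aux_cfc_inv f hB]
  exact aux_OA h hB.inv hA.inv (aux_inv_anti hA hB hAB)

lemma aux_aeval_block {ι : Type*} [Fintype ι] [DecidableEq ι] (X Y : Matrix ι ι ℂ)
    (U V : Matrix (ι ⊕ ι) (ι ⊕ ι) ℂ) (hVU : V * U = 1) (hUV : U * V = 1) (p : Polynomial ℝ) :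
    Polynomial.aeval (V * fromBlocks X 0 0 Y * U) p =
      V * fromBlocks (Polynomial.aeval X p) 0 0 (Polynomial.aeval Y p) * U := by
  induction p using Polynomial.induction_on with
  | C r =>
    simp only [Polynomial.aeval_C, Algebra.algebraMap_eq_smul_one]
    have : fromBlocks (r • (1 : Matrix ι ι ℂ)) 0 0 (r • (1 : Matrix ι ι ℂ)) =
      r • (1 : Matrix (ι ⊕ ι) (ι ⊕ ι) ℂ) := by
      rw [← fromBlocks_one, fromBlocks_smul]; simp
    rw [this]; simp [hVU]
  | add p q hp hq =>
    simp only [map_add, hp, hq]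
    rw [← add_mul, ← mul_add, fromBlocks_add]; simp
  | monomial n r ih =>
    have e : ∀ Z : Matrix ι ι ℂ, Polynomial.aeval Z (Polynomial.C r * Polynomial.X ^ (n+1)) =
      Polynomial.aeval Z (Polynomial.C r * Polynomial.X ^ n) * Z := by
      intro Z; simp [pow_succ, mul_assoc]
    rw [e, e, pow_succ, ← mul_assoc, map_mul, ih, Polynomial.aeval_X]
    have : fromBlocks ((Polynomial.aeval X) (Polynomial.C r * Polynomial.X ^ n) * X) 0 0
        ((Polynomial.aeval Y) (Polynomial.C r * Polynomial.X ^ n) * Y) =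
        fromBlocks ((Polynomial.aeval X) (Polynomial.C r * Polynomial.X ^ n)) 0 0
        ((Polynomial.aeval Y) (Polynomial.C r * Polynomial.X ^ n)) * fromBlocks X 0 0 Y := by
      rw [fromBlocks_multiply]; simp
    rw [this]
    generalize fromBlocks ((Polynomial.aeval X) (Polynomial.C r * Polynomial.X ^ n)) 0 0
        ((Polynomial.aeval Y) (Polynomial.C r * Polynomial.X ^ n)) = P
    generalize fromBlocks X 0 0 Y = Q
    calc V * P * U * (V * Q * U) = V * P * (U * V) * Q * U := by simp only [mul_assoc]
      _ = _ := by rw [hUV]; simp only [mul_assoc, mul_one]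

lemma aux_cfc_block {ι : Type*} [Fintype ι] [DecidableEq ι] (f : ℝ → ℝ) {X Y : Matrix ι ι ℂ}
    (hX : X.IsHermitian) (hY : Y.IsHermitian)
    (U : Matrix (ι ⊕ ι) (ι ⊕ ι) ℂ) (hVU : Uᴴ * U = 1) :
    cfc f (Uᴴ * fromBlocks X 0 0 Y * U) =
      Uᴴ * fromBlocks (cfc f X) 0 0 (cfc f Y) * U := by
  have hW : (Uᴴ * fromBlocks X 0 0 Y * U).IsHermitian := by
    apply isHermitian_conjTranspose_mul_mul
    exact IsHermitian.fromBlocks hX (by simp) hY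
  obtain ⟨p, hp⟩ := aux_interp f (spectrum ℝ X ∪ spectrum ℝ Y ∪
    spectrum ℝ (Uᴴ * fromBlocks X 0 0 Y * U))
    (((Matrix.finite_real_spectrum).union (Matrix.finite_real_spectrum)).union
      (Matrix.finite_real_spectrum))
  rw [aux_cfc_poly f X hX p (fun x hx => hp x (Or.inl (Or.inl hx))),
    aux_cfc_poly f Y hY p (fun x hx => hp x (Or.inl (Or.inr hx))),
    aux_cfc_poly f _ hW p (fun x hx => hp x (Or.inr hx))]
  exact aux_aeval_block X Y U _ hVU (mul_eq_one_comm.1 hVU) p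

lemma aux_diag_posDef {ι : Type*} [Fintype ι] [DecidableEq ι] {X Y : Matrix ι ι ℂ}
    (hX : X.PosDef) (hY : Y.PosDef) : (fromBlocks X 0 0 Y).PosDef := by
  have := hX.isUnit.invertible
  have h : (fromBlocks X 0 0ᴴ Y).PosSemidef := by
    rw [Matrix.PosDef.fromBlocks₁₁ _ _ hX]
    simpa using hY.posSemidef
  rw [conjTranspose_zero] at h
  rw [h.posDef_iff_isUnit, Matrix.isUnit_iff_isUnit_det, det_fromBlocks_zero₂₁]
  exact ((Matrix.isUnit_iff_isUnit_det _).1 hX.isUnit).mul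
    ((Matrix.isUnit_iff_isUnit_det _).1 hY.isUnit)

lemma aux_conj {ι : Type*} [Fintype ι] [DecidableEq ι] (X Y : Matrix ι ι ℂ) (c s : ℝ) :
    (fromBlocks (c • (1 : Matrix ι ι ℂ)) (s • 1) (-s • 1) (c • 1))ᴴ * fromBlocks X 0 0 Y *
      fromBlocks (c • (1 : Matrix ι ι ℂ)) (s • 1) (-s • 1) (c • 1) =
    fromBlocks ((c * c) • X + (s * s) • Y) ((c * s) • (X - Y)) ((c * s) • (X - Y))
      ((s * s) • X + (c * c) • Y) := by
  rw [fromBlocks_conjTranspose, fromBlocks_multiply, fromBlocks_multiply]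
  congr 1 <;> simp [smul_smul, smul_sub, mul_comm] <;> abel

/-- Operator monotone implies operator concave, up to `ε`. -/
lemma aux_concave_eps {ι : Type*} [Fintype ι] [DecidableEq ι] {f : ℝ → ℝ}
    (h : OperatorAntitone f) {X Y : Matrix ι ι ℂ} (hX : X.PosDef) (hY : Y.PosDef)
    {t : ℝ} (ht : t ∈ Set.Icc (0:ℝ) 1) {ε : ℝ} (hε : 0 < ε) :
    (1 - t) • cfc (fun x => f x⁻¹) X + t • cfc (fun x => f x⁻¹) Y ≤
      cfc (fun x => f x⁻¹) ((1 - t) • X + t • Y + ε • 1) := by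
  set k : ℝ → ℝ := fun x => f x⁻¹ with hk
  obtain ⟨c, hc⟩ : ∃ c : ℝ, c * c = 1 - t :=
    ⟨Real.sqrt (1 - t), Real.mul_self_sqrt (sub_nonneg.2 ht.2)⟩
  obtain ⟨s, hs⟩ : ∃ s : ℝ, s * s = t := ⟨Real.sqrt t, Real.mul_self_sqrt ht.1⟩
  set U : Matrix (ι ⊕ ι) (ι ⊕ ι) ℂ :=
    fromBlocks (c • (1 : Matrix ι ι ℂ)) (s • 1) (-s • 1) (c • 1) with hU
  have hUU : Uᴴ * U = 1 := by
    have := aux_conj (1 : Matrix ι ι ℂ) 1 c s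
    rw [fromBlocks_one, mul_one] at this
    rw [hU, this, hc, hs, ← fromBlocks_one, ← add_smul, ← add_smul]
    simp
  have hUu : IsUnit U := IsUnit.of_mul_eq_one_right _ hUU
  have hXY := aux_diag_posDef hX hY
  have hW : (Uᴴ * fromBlocks X 0 0 Y * U).PosDef :=
    hXY.conjTranspose_mul_mul_same (Matrix.mulVec_injective_of_isUnit hUu)
  have hZ : ((1 - t) • X + t • Y + ε • (1 : Matrix ι ι ℂ)).PosDef :=
    (aux_comb_posDef hX hY ht).add_posSemidef ((PosSemidef.one).smul hε.le)
  set D : Matrix ι ι ℂ := -((c * s) • (X - Y)) with hD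
  have hDh : D.IsHermitian := by
    have : (X - Y).IsHermitian := hX.1.sub hY.1
    simp only [hD, IsHermitian, conjTranspose_neg, conjTranspose_smul, this.eq, star_trivial]
  have hE : (ε • (1 : Matrix ι ι ℂ)).PosDef := PosDef.one.smul hε
  obtain ⟨M, hM0, hM⟩ := aux_bound (A := (s * s) • X + (c * c) • Y + Dᴴ * (ε • 1)⁻¹ * D) (by
    refine ((IsSelfAdjoint.smul (IsSelfAdjoint.all _) hX.1).add
      (IsSelfAdjoint.smul (IsSelfAdjoint.all _) hY.1)).add ?_
    exact isHermitian_conjTranspose_mul_mul _ hE.inv.1)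
  have hMp : (M • (1 : Matrix ι ι ℂ)).PosDef := PosDef.one.smul hM0
  have hle : Uᴴ * fromBlocks X 0 0 Y * U ≤
      fromBlocks ((1 - t) • X + t • Y + ε • (1 : Matrix ι ι ℂ)) 0 0 (M • 1) := by
    have := hE.isUnit.invertible
    rw [hU, aux_conj, Matrix.le_iff, sub_eq_add_neg, fromBlocks_neg, fromBlocks_add]
    have key : (fromBlocks (ε • (1 : Matrix ι ι ℂ)) D Dᴴ
        (M • 1 - ((s * s) • X + (c * c) • Y))).PosSemidef := by
      rw [Matrix.PosDef.fromBlocks₁₁ _ _ hE]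
      rw [Matrix.le_iff] at hM
      have e : M • (1 : Matrix ι ι ℂ) - ((s * s) • X + (c * c) • Y) - Dᴴ * (ε • 1)⁻¹ * D =
        M • 1 - ((s * s) • X + (c * c) • Y + Dᴴ * (ε • 1)⁻¹ * D) := by abel
      rw [e]; exact hM
    rw [hDh.eq] at key
    have e1 : (1 - t) • X + t • Y + ε • (1 : Matrix ι ι ℂ) + -((c * c) • X + (s * s) • Y)
        = ε • 1 := by rw [hc, hs]; abel
    have e2 : (0 : Matrix ι ι ℂ) + -((c * s) • (X - Y)) = D := by rw [zero_add]
    have e3 : M • (1 : Matrix ι ι ℂ) + -((s * s) • X + (c * c) • Y) =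
        M • 1 - ((s * s) • X + (c * c) • Y) := by abel
    rw [e1, e2, e3]
    exact key
  have h1 := aux_mono h hW (aux_diag_posDef hZ hMp) hle
  rw [aux_cfc_block _ hX.1 hY.1 U hUU] at h1
  have h2 := aux_cfc_block k hZ.1 hMp.1 (1 : Matrix (ι ⊕ ι) (ι ⊕ ι) ℂ) (by simp)
  simp only [conjTranspose_one, one_mul, mul_one] at h2
  rw [h2, hU, aux_conj, Matrix.le_iff] at h1
  have h3 := h1.submatrix Sum.inl
  rw [hc, hs] at h3
  exact h3

lemma aux_concave {ι : Type*} [Fintype ι] [DecidableEq ι] {f : ℝ → ℝ}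
    (hf : ContinuousOn f (Set.Ioi 0))
    (h : OperatorAntitone f) {X Y : Matrix ι ι ℂ} (hX : X.PosDef) (hY : Y.PosDef)
    {t : ℝ} (ht : t ∈ Set.Icc (0:ℝ) 1) :
    (1 - t) • cfc (fun x => f x⁻¹) X + t • cfc (fun x => f x⁻¹) Y ≤
      cfc (fun x => f x⁻¹) ((1 - t) • X + t • Y) := by
  have hZ := aux_comb_posDef hX hY ht
  have hh : ∀ (g : ℝ → ℝ) (A : Matrix ι ι ℂ), (cfc g A).IsHermitian :=
    fun g A => cfc_predicate (p := IsSelfAdjoint) g A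
  apply aux_limit _ (hh _ _)
  · intro δ hδ
    set Z := (1 - t) • X + t • Y with hZd
    have hev : ∀ x ∈ spectrum ℝ Z, ∀ᶠ ε in nhdsWithin (0:ℝ) (Set.Ioi 0),
        f (x + ε)⁻¹ ≤ f x⁻¹ + δ := by
      intro x hx
      have hx0 := aux_spec_pos hZ x hx
      have h1 : ContinuousAt f x⁻¹ := hf.continuousAt (Ioi_mem_nhds (inv_pos.2 hx0))
      have h2 : Filter.Tendsto (fun ε : ℝ => f (x + ε)⁻¹) (nhds 0) (nhds (f x⁻¹)) := by
        refine Filter.Tendsto.comp h1 ?_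
        have : ContinuousAt (fun ε : ℝ => (x + ε)⁻¹) 0 :=
          ContinuousAt.inv₀ (by fun_prop) (by simpa using hx0.ne')
        simpa [ContinuousAt] using this
      have h3 := h2.eventually (Iio_mem_nhds (show f x⁻¹ < f x⁻¹ + δ by linarith))
      exact (h3.filter_mono nhdsWithin_le_nhds).mono fun ε hε => le_of_lt hε
    have hev2 := (Filter.eventually_all_finite (Matrix.finite_real_spectrum (A := Z))).2 hev
    obtain ⟨ε, hε, hε0⟩ := (hev2.and self_mem_nhdsWithin).exists
    refine (aux_concave_eps h hX hY ht hε0).trans ?_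
    rw [← hZd]
    have e1 : cfc (fun x : ℝ => x + ε) Z = Z + ε • 1 := by
      have e := cfc_add_const ε (fun x => x) Z (aux_cont _ _) hZ.1
      exact e.trans (congrArg₂ (· + ·) (cfc_id' ℝ Z hZ.1) (Algebra.algebraMap_eq_smul_one ε))
    have e2 : cfc (fun x : ℝ => f x⁻¹) (Z + ε • 1) = cfc (fun x : ℝ => f (x + ε)⁻¹) Z := by
      rw [← e1]
      exact (cfc_comp' (fun x : ℝ => f x⁻¹) (fun x : ℝ => x + ε) Z
        (((Matrix.finite_real_spectrum).image _).continuousOn _) (aux_cont _ _) hZ.1).symm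
    have e3 := cfc_add_const δ (fun x => f x⁻¹) Z (aux_cont _ _) hZ.1
    rw [Algebra.algebraMap_eq_smul_one] at e3
    rw [e2]
    refine le_trans ?_ (le_of_eq e3)
    exact cfc_mono hε (aux_cont _ _) (aux_cont _ _)
  · exact ((IsSelfAdjoint.smul (IsSelfAdjoint.all _) (hh _ _)).add
      (IsSelfAdjoint.smul (IsSelfAdjoint.all _) (hh _ _)))

lemma aux_forward {f : ℝ → ℝ} (hf : ContinuousOn f (Set.Ioi 0))
    (hf' : ∀ x ∈ Set.Ioi (0:ℝ), f x ∈ Set.Ioi (0:ℝ)) (h : OperatorAntitone f)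
    (n : ℕ) (A B : Matrix (Fin n) (Fin n) ℂ) (hA : A.PosDef) (hB : B.PosDef)
    (t : ℝ) (ht : t ∈ Set.Icc (0:ℝ) 1) :
    wharm t (cfc f A) (cfc f B) ≤ cfc f (wharm t A B) := by
  have h1 := aux_concave hf h hA.inv hB.inv ht
  rw [aux_cfc_inv f hA.inv, aux_cfc_inv f hB.inv,
    aux_cfc_inv f (aux_comb_posDef hA.inv hB.inv ht),
    nonsing_inv_nonsing_inv _ ((Matrix.isUnit_iff_isUnit_det _).1 hA.isUnit),
    nonsing_inv_nonsing_inv _ ((Matrix.isUnit_iff_isUnit_det _).1 hB.isUnit)] at h1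
  refine le_trans ?_ h1
  have hfA := aux_cfc_posDef hf' hA
  have hfB := aux_cfc_posDef hf' hB
  have h2 := aux_inv_convex hfA.inv hfB.inv ht
  rwa [nonsing_inv_nonsing_inv _ ((Matrix.isUnit_iff_isUnit_det _).1 hfA.isUnit),
    nonsing_inv_nonsing_inv _ ((Matrix.isUnit_iff_isUnit_det _).1 hfB.isUnit)] at h2

lemma aux_forward_anti {f : ℝ → ℝ} (h : OperatorAntitone f) : AntitoneOn f (Set.Ioi 0) := by
  intro x hx y hy hxy
  have hp : ∀ z ∈ Set.Ioi (0:ℝ), (algebraMap ℝ (Matrix (Fin 1) (Fin 1) ℂ) z).PosDef := by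
    intro z hz
    rw [Algebra.algebraMap_eq_smul_one]
    exact PosDef.one.smul hz
  have h1 := h 1 _ _ (hp x hx) (hp y hy) (by
    rw [MLE, ← map_sub, Algebra.algebraMap_eq_smul_one]
    exact PosSemidef.one.smul (sub_nonneg.2 hxy))
  rw [cfc_algebraMap, cfc_algebraMap, MLE, ← map_sub] at h1
  have h2 := h1.diag_nonneg (i := 0)
  rw [Algebra.algebraMap_eq_smul_one] at h2
  simp at h2
  exact_mod_cast h2

lemma aux_backward {f : ℝ → ℝ}
    (hf' : ∀ x ∈ Set.Ioi (0:ℝ), f x ∈ Set.Ioi (0:ℝ)) (hanti : AntitoneOn f (Set.Ioi 0))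
    (n : ℕ) (hH : ∀ (A B : Matrix (Fin n) (Fin n) ℂ), A.PosDef → B.PosDef →
          ∀ t ∈ Set.Icc (0:ℝ) 1, wharm t (cfc f A) (cfc f B) ≤ cfc f (wharm t A B))
    (A B : Matrix (Fin n) (Fin n) ℂ) (hA : A.PosDef) (hB : B.PosDef) (hAB : A ≤ B) :
    cfc f B ≤ cfc f A := by
  have ii : ∀ {Z : Matrix (Fin n) (Fin n) ℂ}, Z.PosDef → Z⁻¹⁻¹ = Z := fun hZ =>
    nonsing_inv_nonsing_inv _ ((Matrix.isUnit_iff_isUnit_det _).1 hZ.isUnit)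
  have hfA := aux_cfc_posDef hf' hA
  have hfB := aux_cfc_posDef hf' hB
  suffices hs : (cfc f A)⁻¹ ≤ (cfc f B)⁻¹ by
    have := aux_inv_anti hfA.inv hfB.inv hs
    rwa [ii hfA, ii hfB] at this
  obtain ⟨b, hb0, hb⟩ := aux_bound hB.1
  have hfb : 0 < f b := hf' b hb0
  apply aux_limit hfA.inv.1 hfB.inv.1
  intro δ hδ
  obtain ⟨t, ht0, ht1, htδ⟩ : ∃ t : ℝ, 0 < t ∧ t ≤ 1 ∧ t * (f b)⁻¹ ≤ δ := by
    refine ⟨min 1 (δ * f b), lt_min one_pos (mul_pos hδ hfb), min_le_left _ _, ?_⟩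
    rw [← div_eq_mul_inv, div_le_iff₀ hfb]
    exact min_le_right _ _
  have ht : t ∈ Set.Icc (0:ℝ) 1 := ⟨ht0.le, ht1⟩
  have hC := Matrix.le_iff.1 (aux_inv_anti hA hB hAB)
  have hK : (B⁻¹ + t⁻¹ • (A⁻¹ - B⁻¹)).PosDef :=
    hB.inv.add_posSemidef (hC.smul (inv_pos.2 ht0).le)
  set K := B⁻¹ + t⁻¹ • (A⁻¹ - B⁻¹) with hKd
  have hG := hK.inv
  have e1 : wharm t B K⁻¹ = A := by
    rw [wharm, ii hK, hKd, smul_add, smul_smul, mul_inv_cancel₀ ht0.ne', one_smul]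
    have : (1 - t) • B⁻¹ + (t • B⁻¹ + (A⁻¹ - B⁻¹)) = A⁻¹ := by
      rw [sub_smul, one_smul]; abel
    rw [this, ii hA]
  have hGB : K⁻¹ ≤ b • 1 := by
    refine le_trans ?_ hb
    have := aux_inv_anti hB.inv hK (by
      rw [Matrix.le_iff, hKd, add_sub_cancel_left]
      exact hC.smul (inv_pos.2 ht0).le)
    rwa [ii hB] at this
  have hfG := aux_cfc_posDef hf' hG
  have hG1 : f b • 1 ≤ cfc f K⁻¹ := by
    rw [← Algebra.algebraMap_eq_smul_one]
    refine algebraMap_le_cfc f (f b) _ (fun x hx => ?_) (aux_cont _ _) hG.1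
    have hx0 := aux_spec_pos hG x hx
    refine hanti hx0 hb0 ?_
    rw [← Algebra.algebraMap_eq_smul_one] at hGB
    exact (le_algebraMap_iff_spectrum_le hG.1).1 hGB x hx
  have hG2 : (cfc f K⁻¹)⁻¹ ≤ (f b)⁻¹ • 1 := by
    have := aux_inv_anti (PosDef.one.smul hfb) hfG hG1
    rwa [show (f b • (1 : Matrix (Fin n) (Fin n) ℂ))⁻¹ = (f b)⁻¹ • 1 from
      Matrix.inv_eq_right_inv (by simp [smul_smul, hfb.ne'])] at this
  have h1 := hH B K⁻¹ hB hG t ht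
  rw [e1, wharm] at h1
  have hP := aux_comb_posDef hfB.inv hfG.inv ht
  have h2 := aux_inv_anti hP.inv hfA h1
  rw [ii hP] at h2
  refine h2.trans ?_
  rw [Matrix.le_iff] at hG2 ⊢
  have := ((hfB.inv.posSemidef.smul ht0.le).add (hG2.smul ht0.le)).add
    ((PosSemidef.one (n := Fin n) (R := ℂ)).smul (sub_nonneg.2 htδ))
  have e : (cfc f B)⁻¹ + δ • 1 - ((1 - t) • (cfc f B)⁻¹ + t • (cfc f K⁻¹)⁻¹) =
      t • (cfc f B)⁻¹ + t • ((f b)⁻¹ • 1 - (cfc f K⁻¹)⁻¹) + (δ - t * (f b)⁻¹) • 1 := by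
    simp only [sub_smul, smul_sub, smul_smul, one_smul]
    abel
  rw [e]
  exact this

end helpers

theorem stmt_12 (f : ℝ → ℝ) (hf : ContinuousOn f (Set.Ioi 0))
    (hf' : ∀ x ∈ Set.Ioi (0:ℝ), f x ∈ Set.Ioi (0:ℝ)) :
    OperatorAntitone f ↔
      (AntitoneOn f (Set.Ioi 0) ∧
        ∀ (n : ℕ) (A B : Matrix (Fin n) (Fin n) ℂ), A.PosDef → B.PosDef →
          ∀ t ∈ Set.Icc (0:ℝ) 1,
            MLE (wharm t (cfc f A) (cfc f B)) (cfc f (wharm t A B))) := by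
  constructor
  · intro h
    exact ⟨aux_forward_anti h, fun n A B hA hB t ht => aux_forward hf hf' h n A B hA hB t ht⟩
  · rintro ⟨h1, h2⟩ n A B hA hB hAB
    exact aux_backward hf' h1 n (h2 n) A B hA hB hAB
end

section
/- For every n ∈ ℕ, all n×n positive definite complex matrices A, B, every r ∈ [-1,0], and every t ∈ [0,1], one has (A !_t B)^r ≥ A^r #_t B^r ≥ A^r !_t B^r in the Loewner order. -/
open Matrix
open scoped ComplexOrder

open scoped MatrixOrder

theorem aux_cont_s18 {n : ℕ} (X : Matrix (Fin n) (Fin n) ℂ) (f : ℝ → ℝ) :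
    ContinuousOn f (spectrum ℝ X) :=
  (Matrix.finite_real_spectrum (A := X)).continuousOn f

theorem aux_spec {n : ℕ} {X : Matrix (Fin n) (Fin n) ℂ} (hX : X.PosDef) {x : ℝ}
    (hx : x ∈ spectrum ℝ X) : 0 < x := by
  have := (Matrix.isStrictlyPositive_iff_posDef.mpr hX)
  exact this.spectrum_pos hx

theorem aux_mul {n : ℕ} {X : Matrix (Fin n) (Fin n) ℂ} (hX : X.PosDef) (f g : ℝ → ℝ) :
    cfc f X * cfc g X = cfc (fun x => f x * g x) X :=
  (cfc_mul f g X (aux_cont_s18 X f) (aux_cont_s18 X g)).symm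

theorem aux_one {n : ℕ} {X : Matrix (Fin n) (Fin n) ℂ} (hX : X.PosDef) (f : ℝ → ℝ)
    (hf : ∀ x, 0 < x → f x = 1) : cfc f X = 1 := by
  have hs : IsSelfAdjoint X := hX.isHermitian
  rw [cfc_congr (g := fun _ => 1) (fun x hx => hf x (aux_spec hX hx))]
  exact cfc_const_one ℝ X

theorem aux_id {n : ℕ} {X : Matrix (Fin n) (Fin n) ℂ} (hX : X.PosDef) (f : ℝ → ℝ)
    (hf : ∀ x, 0 < x → f x = x) : cfc f X = X := by
  have hs : IsSelfAdjoint X := hX.isHermitian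
  rw [cfc_congr (g := fun x => x) (fun x hx => hf x (aux_spec hX hx))]
  exact cfc_id' ℝ X

theorem aux_inv {n : ℕ} {X : Matrix (Fin n) (Fin n) ℂ} (hX : X.PosDef) :
    X⁻¹ = cfc (fun x : ℝ => x⁻¹) X := by
  apply Matrix.inv_eq_left_inv
  conv_lhs => rw [← aux_id hX (fun x => x) (fun _ _ => rfl)]
  conv_lhs => arg 1; rw [aux_id hX (fun x => x) (fun _ _ => rfl)]
  rw [aux_mul hX]
  exact aux_one hX _ (fun x hx => inv_mul_cancel₀ hx.ne')

theorem aux_mpow_posDef {n : ℕ} {X : Matrix (Fin n) (Fin n) ℂ} (hX : X.PosDef) (r : ℝ) :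
    (mpow X r).PosDef := by
  have h0 : 0 ≤ mpow X r := cfc_nonneg (fun x hx => (Real.rpow_pos_of_pos (aux_spec hX hx) r).le)
  rw [h0.posSemidef.posDef_iff_isUnit]
  have h1 : mpow X r * mpow X (-r) = 1 := by
    unfold mpow
    rw [aux_mul hX]
    exact aux_one hX _ (fun x hx => by rw [← Real.rpow_add hx]; simp)
  exact IsUnit.of_mul_eq_one _ h1

theorem aux_mpow_inv {n : ℕ} {X : Matrix (Fin n) (Fin n) ℂ} (hX : X.PosDef) (s : ℝ) :
    mpow X⁻¹ s = mpow X (-s) := by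
  have hs : IsSelfAdjoint X := hX.isHermitian
  unfold mpow
  rw [aux_inv hX, ← cfc_comp' (fun x : ℝ => x ^ s) (fun x : ℝ => x⁻¹) X
    (((Matrix.finite_real_spectrum (A := X)).image _).continuousOn _) (aux_cont_s18 X _)]
  exact cfc_congr (fun x hx => by
    have := aux_spec hX hx
    simp only [Real.inv_rpow this.le, Real.rpow_neg this.le])

open scoped Matrix.Norms.L2Operator in
theorem aux_concave_s18 {n : ℕ} {C D : Matrix (Fin n) (Fin n) ℂ} (hC : C.PosDef) (hD : D.PosDef)
    (s : ℝ) (hs : s ∈ Set.Icc (0:ℝ) 1) (t : ℝ) (ht : t ∈ Set.Icc (0:ℝ) 1) :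
    warith t (mpow C s) (mpow D s) ≤ mpow (warith t C D) s := by
  have h := (CFC.concaveOn_rpow (A := Matrix (Fin n) (Fin n) ℂ) hs).2
    (Set.mem_Ici.mpr hC.posSemidef.nonneg) (Set.mem_Ici.mpr hD.posSemidef.nonneg)
    (sub_nonneg.mpr ht.2) ht.1 (sub_add_cancel 1 t)
  have hnn : 0 ≤ (1 - t) • C + t • D :=
    add_nonneg (smul_nonneg (by linarith [ht.2]) hC.posSemidef.nonneg)
      (smul_nonneg ht.1 hD.posSemidef.nonneg)
  simp only at h
  rw [CFC.rpow_eq_cfc_real hC.posSemidef.nonneg, CFC.rpow_eq_cfc_real hD.posSemidef.nonneg,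
    CFC.rpow_eq_cfc_real hnn] at h
  exact h

theorem aux_scalar {t x : ℝ} (ht : t ∈ Set.Icc (0:ℝ) 1) (hx : 0 < x) :
    x ^ t ≤ (1 - t) + t * x := by
  have := Real.geom_mean_le_arith_mean2_weighted (w₁ := 1 - t) (w₂ := t) (p₁ := 1) (p₂ := x)
    (by linarith [ht.2]) ht.1 zero_le_one hx.le (by ring)
  simpa using this

theorem aux_scalar_pos {t x : ℝ} (ht : t ∈ Set.Icc (0:ℝ) 1) (hx : 0 < x) :
    0 < (1 - t) + t * x :=
  lt_of_lt_of_le (Real.rpow_pos_of_pos hx t) (aux_scalar ht hx)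

theorem aux_scalar' {t x : ℝ} (ht : t ∈ Set.Icc (0:ℝ) 1) (hx : 0 < x) :
    ((1 - t) + t * x⁻¹)⁻¹ ≤ x ^ t := by
  have h := aux_scalar ht (inv_pos.mpr hx)
  rw [Real.inv_rpow hx.le] at h
  exact inv_le_of_inv_le₀ (Real.rpow_pos_of_pos hx t) h

theorem aux_lin {n : ℕ} {X : Matrix (Fin n) (Fin n) ℂ} (hX : X.PosDef) (f : ℝ → ℝ) (t : ℝ) :
    cfc (fun x => (1 - t) + t * f x) X = (1 - t) • 1 + t • cfc f X := by
  have hs : IsSelfAdjoint X := hX.isHermitian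
  rw [cfc_add _ (fun x => 1 - t) (fun x => t * f x) (aux_cont_s18 X _) (aux_cont_s18 X _),
    cfc_const_mul t f X (aux_cont_s18 X _), cfc_const (1 - t) X, Algebra.algebraMap_eq_smul_one]

theorem aux_means {n : ℕ} {M N : Matrix (Fin n) (Fin n) ℂ} (hM : M.PosDef) (hN : N.PosDef)
    (t : ℝ) (ht : t ∈ Set.Icc (0:ℝ) 1) :
    wgeom t M N ≤ warith t M N ∧ wharm t M N ≤ wgeom t M N := by
  have hP := aux_mpow_posDef hM (1/2)
  have hQ := aux_mpow_posDef hM (-(1/2))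
  have hPQ : mpow M (1/2) * mpow M (-(1/2)) = 1 := by
    unfold mpow
    rw [aux_mul hM]
    exact aux_one hM _ (fun x hx => by rw [← Real.rpow_add hx]; simp)
  have hPP : mpow M (1/2) * mpow M (1/2) = M := by
    unfold mpow
    rw [aux_mul hM]
    exact aux_id hM _ (fun x hx => by rw [← Real.rpow_add hx]; norm_num)
  unfold wgeom
  generalize mpow M (1/2) = P at *
  generalize mpow M (-(1/2)) = Q at *
  have hQP : Q * P = 1 := mul_eq_one_comm.mp hPQ
  have hPs : IsSelfAdjoint P := hP.isHermitian
  have hX : (Q * N * Q).PosDef := by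
    have h0 : (Q * N * Q).PosSemidef := by
      have := hN.posSemidef.mul_mul_conjTranspose_same Q
      rwa [hQ.isHermitian.eq] at this
    rw [h0.posDef_iff_isUnit]
    exact (hQ.isUnit.mul hN.isUnit).mul hQ.isUnit
  have hNX : N = P * (Q * N * Q) * P := by
    calc N = 1 * N * 1 := by simp
      _ = (P * Q) * N * (Q * P) := by rw [hPQ, hQP]
      _ = _ := by simp only [mul_assoc]
  generalize Q * N * Q = X at *
  have hXs : IsSelfAdjoint X := hX.isHermitian
  constructor
  · have h1 : mpow X t ≤ (1 - t) • 1 + t • X := by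
      have e := aux_lin hX (fun x => x) t
      rw [aux_id hX (fun x => x) (fun _ _ => rfl)] at e
      rw [← e]
      exact cfc_mono (fun x hx => aux_scalar ht (aux_spec hX hx)) (aux_cont_s18 X _) (aux_cont_s18 X _)
    refine (hPs.conjugate_le_conjugate h1).trans (le_of_eq ?_)
    unfold warith
    rw [mul_add, add_mul, mul_smul_comm, mul_smul_comm, smul_mul_assoc, smul_mul_assoc, mul_one,
      hPP, ← hNX]
  · have h1 : cfc (fun x : ℝ => ((1 - t) + t * x⁻¹)⁻¹) X ≤ mpow X t :=
      cfc_mono (fun x hx => aux_scalar' ht (aux_spec hX hx)) (aux_cont_s18 X _) (aux_cont_s18 X _)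
    refine (le_of_eq ?_).trans (hPs.conjugate_le_conjugate h1)
    unfold wharm
    have hMi : M⁻¹ = Q * Q := by
      apply Matrix.inv_eq_left_inv
      rw [← hPP]
      calc Q * Q * (P * P) = Q * (Q * P) * P := by simp only [mul_assoc]
        _ = 1 := by rw [hQP, mul_one, hQP]
    have hXi : X⁻¹ * X = 1 := Matrix.nonsing_inv_mul X ((Matrix.isUnit_iff_isUnit_det X).mp hX.isUnit)
    have hNi : N⁻¹ = Q * X⁻¹ * Q := by
      apply Matrix.inv_eq_left_inv
      rw [hNX]
      calc Q * X⁻¹ * Q * (P * X * P) = Q * X⁻¹ * (Q * P) * X * P := by simp only [mul_assoc]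
        _ = Q * (X⁻¹ * X) * P := by rw [hQP, mul_one]; simp only [mul_assoc]
        _ = 1 := by rw [hXi, mul_one, hQP]
    have hS : (1 - t) • M⁻¹ + t • N⁻¹ = Q * cfc (fun x : ℝ => (1 - t) + t * x⁻¹) X * Q := by
      rw [aux_lin hX, ← aux_inv hX, mul_add, add_mul, mul_smul_comm, mul_smul_comm,
        smul_mul_assoc, smul_mul_assoc, mul_one, hMi, hNi]
    rw [hS]
    apply Matrix.inv_eq_left_inv
    have hc : cfc (fun x : ℝ => ((1 - t) + t * x⁻¹)⁻¹) X * cfc (fun x : ℝ => (1 - t) + t * x⁻¹) X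
        = 1 := by
      rw [aux_mul hX]
      exact aux_one hX _ (fun x hx =>
        inv_mul_cancel₀ (aux_scalar_pos ht (inv_pos.mpr hx)).ne')
    generalize cfc (fun x : ℝ => ((1 - t) + t * x⁻¹)⁻¹) X = Y at *
    generalize cfc (fun x : ℝ => (1 - t) + t * x⁻¹) X = Z at *
    calc P * Y * P * (Q * Z * Q) = P * Y * (P * Q) * Z * Q := by simp only [mul_assoc]
      _ = P * (Y * Z) * Q := by rw [hPQ, mul_one]; simp only [mul_assoc]
      _ = 1 := by rw [hc, mul_one, hPQ]

theorem stmt_18 (n : ℕ) (A B : Matrix (Fin n) (Fin n) ℂ)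
    (hA : A.PosDef) (hB : B.PosDef)
    (r : ℝ) (hr : r ∈ Set.Icc (-1:ℝ) 0) (t : ℝ) (ht : t ∈ Set.Icc (0:ℝ) 1) :
    MLE (wgeom t (mpow A r) (mpow B r)) (mpow (wharm t A B) r) ∧
      MLE (wharm t (mpow A r) (mpow B r)) (wgeom t (mpow A r) (mpow B r)) := by
  obtain ⟨h1, h2⟩ := aux_means (aux_mpow_posDef hA r) (aux_mpow_posDef hB r) t ht
  refine ⟨?_, h2⟩
  have h3 := aux_concave_s18 hA.inv hB.inv (-r) ⟨by linarith [hr.2], by linarith [hr.1]⟩ t ht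
  rw [aux_mpow_inv hA, aux_mpow_inv hB, neg_neg] at h3
  have hS : (warith t A⁻¹ B⁻¹).PosDef := by
    unfold warith
    rcases ht.1.eq_or_lt with h | h
    · subst h; simpa using hA.inv
    · exact Matrix.PosDef.posSemidef_add (hA.inv.posSemidef.smul (by linarith [ht.2]))
        (hB.inv.smul h)
  have e : mpow (wharm t A B) r = mpow (warith t A⁻¹ B⁻¹) (-r) := aux_mpow_inv hS r
  have h4 := h1.trans h3
  rw [← e] at h4
  exact h4
end
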